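/- Suppose 𝒮 is finite. If the topological interior of the deterministic code capacity region ℛ_d of the two-sender classical-quantum arbitrarily varying multiple access channel is nonempty, then ℛ_d = ℛ_r. -/

import Mathlib

open scoped ComplexOrder

noncomputable section

/-- A density matrix: positive semidefinite with unit trace. -/
def IsDensity {m : Type*} [Fintype m] (ρ : Matrix m m ℂ) : Prop :=
  ρ.PosSemidef ∧ ρ.trace = 1

/-- Tensor product of a finite family of matrices, realized on functions. -/
def tensorFam {k d : Type*} [Fintype k] (ρ : k → Matrix d d ℂ) :
    Matrix (k → d) (k → d) ℂ :=
  Matrix.of fun i j => ∏ a, ρ a (i a) (j a)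

section Codes

variable {𝒳 𝒴 𝒮 : Type*} [Fintype 𝒳] [DecidableEq 𝒳] [Fintype 𝒴] [DecidableEq 𝒴] {d : ℕ}

/-- `(R₁, R₂)` is an achievable deterministic rate pair for the CQ-AVMAC. -/
def AchievableDet (ρ : 𝒳 → 𝒴 → 𝒮 → Matrix (Fin d) (Fin d) ℂ) (R1 R2 : ℝ) : Prop :=
  0 ≤ R1 ∧ 0 ≤ R2 ∧
  ∀ β > (0 : ℝ), ∀ δ₁ > (0 : ℝ), ∀ δ₂ > (0 : ℝ), ∃ N : ℕ, ∀ n ≥ N,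
    ∃ (M₁ M₂ : ℕ) (f₁ : Fin M₁ → (Fin n → 𝒳)) (f₂ : Fin M₂ → (Fin n → 𝒴))
      (D : Fin M₁ → Fin M₂ → Matrix (Fin n → Fin d) (Fin n → Fin d) ℂ),
      (∀ m₁ m₂, (D m₁ m₂).PosSemidef) ∧
      (∑ m₁, ∑ m₂, D m₁ m₂ = 1) ∧
      (1 / (n : ℝ)) * Real.logb 2 M₁ > R1 - δ₁ ∧
      (1 / (n : ℝ)) * Real.logb 2 M₂ > R2 - δ₂ ∧
      (⨆ sv : Fin n → 𝒮,
        1 - (1 / ((M₁ : ℝ) * (M₂ : ℝ))) * ∑ m₁, ∑ m₂,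
          (Matrix.trace (D m₁ m₂ *
            tensorFam fun k => ρ (f₁ m₁ k) (f₂ m₂ k) (sv k))).re) < β

/-- The deterministic code capacity region `ℛ_d`. -/
def Rd (ρ : 𝒳 → 𝒴 → 𝒮 → Matrix (Fin d) (Fin d) ℂ) : Set (ℝ × ℝ) :=
  closure {r : ℝ × ℝ | AchievableDet ρ r.1 r.2}

/-- `(R₁, R₂)` is an achievable randomized rate pair for the CQ-AVMAC. -/
def AchievableRand (ρ : 𝒳 → 𝒴 → 𝒮 → Matrix (Fin d) (Fin d) ℂ) (R1 R2 : ℝ) : Prop :=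
  0 ≤ R1 ∧ 0 ≤ R2 ∧
  ∀ β > (0 : ℝ), ∀ δ₁ > (0 : ℝ), ∀ δ₂ > (0 : ℝ), ∃ N : ℕ, ∀ n ≥ N,
    ∃ (M₁ M₂ k₁ k₂ : ℕ) (G₁ : Fin k₁ → ℝ) (G₂ : Fin k₂ → ℝ)
      (f₁ : Fin k₁ → Fin M₁ → (Fin n → 𝒳)) (f₂ : Fin k₂ → Fin M₂ → (Fin n → 𝒴))
      (D : Fin k₁ → Fin k₂ → Fin M₁ → Fin M₂ →
        Matrix (Fin n → Fin d) (Fin n → Fin d) ℂ),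
      (∀ γ, 0 ≤ G₁ γ) ∧ (∑ γ, G₁ γ = 1) ∧ (∀ γ, 0 ≤ G₂ γ) ∧ (∑ γ, G₂ γ = 1) ∧
      (∀ γ₁ γ₂ m₁ m₂, (D γ₁ γ₂ m₁ m₂).PosSemidef) ∧
      (∀ γ₁ γ₂, ∑ m₁, ∑ m₂, D γ₁ γ₂ m₁ m₂ = 1) ∧
      (1 / (n : ℝ)) * Real.logb 2 M₁ > R1 - δ₁ ∧
      (1 / (n : ℝ)) * Real.logb 2 M₂ > R2 - δ₂ ∧
      (⨆ sv : Fin n → 𝒮, ∑ γ₁, ∑ γ₂, G₁ γ₁ * G₂ γ₂ *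
        (1 - (1 / ((M₁ : ℝ) * (M₂ : ℝ))) * ∑ m₁, ∑ m₂,
          (Matrix.trace (D γ₁ γ₂ m₁ m₂ *
            tensorFam fun k => ρ (f₁ γ₁ m₁ k) (f₂ γ₂ m₂ k) (sv k))).re)) < β

/-- The random code capacity region `ℛ_r`. -/
def Rr (ρ : 𝒳 → 𝒴 → 𝒮 → Matrix (Fin d) (Fin d) ℂ) : Set (ℝ × ℝ) :=
  closure {r : ℝ × ℝ | AchievableRand ρ r.1 r.2}

end Codes

/-!
Ahlswede's elimination technique. A sample of independently drawn keys replaces the key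
distribution of each sender: by a Chernoff and union bound over the `|𝒮| ^ m` state sequences of
length `m`, a number of keys linear in `m` suffices, first for sender 1 and then for sender 2.
As the interior of `ℛ_d` is nonempty, some deterministic code has positive rates for both senders,
so a prefix whose length is a small fraction of the block length carries exponentially many, hence
enough, keys. The receiver decodes the keys from the prefix and then the messages from the rest of
the block, and the prefix costs an arbitrarily small part of the rate.
-/

open Filter Finset
open scoped BigOperators Kronecker MatrixOrder

section Trace

variable {m : Type*} [Fintype m]

theorem trace_mul_nonneg_of_posSemidef {A B : Matrix m m ℂ} (hA : A.PosSemidef)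
    (hB : B.PosSemidef) : 0 ≤ (A * B).trace := by
  classical
  obtain ⟨C, rfl⟩ := CStarAlgebra.nonneg_iff_eq_star_mul_self.mp hA.nonneg
  rw [Matrix.mul_assoc, Matrix.trace_mul_comm]
  exact (hB.mul_mul_conjTranspose_same C).trace_nonneg

theorem re_trace_mul_le_one_of_sum_eq_one [DecidableEq m] {ι : Type*} [Fintype ι]
    {D : ι → Matrix m m ℂ} (hD : ∀ i, (D i).PosSemidef) (hsum : ∑ i, D i = 1) {σ : Matrix m m ℂ}
    (hσ : IsDensity σ) (i : ι) : (D i * σ).trace.re ≤ 1 := by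
  have htotal : ∑ i, (D i * σ).trace.re = 1 := by
    rw [← Complex.re_sum, ← Matrix.trace_sum, ← Finset.sum_mul, hsum, one_mul, hσ.2,
      Complex.one_re]
  rw [← htotal]
  exact single_le_sum (f := fun i => (D i * σ).trace.re)
    (fun i _ => (Complex.le_def.mp (trace_mul_nonneg_of_posSemidef (hD i) hσ.1)).1) (mem_univ i)

end Trace

section Tensor

variable {k ι : Type*} [Fintype k]

theorem tensorFam_mul [DecidableEq k] [Fintype ι] (A B : k → Matrix ι ι ℂ) :
    tensorFam (fun a => A a * B a) = tensorFam A * tensorFam B := by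
  ext i j
  simp only [tensorFam, Matrix.of_apply, Matrix.mul_apply, Fintype.prod_sum, prod_mul_distrib]

theorem conjTranspose_tensorFam (A : k → Matrix ι ι ℂ) :
    (tensorFam A).conjTranspose = tensorFam fun a => (A a).conjTranspose := by
  ext i j
  simp only [tensorFam, Matrix.of_apply, Matrix.conjTranspose_apply, star_prod]

theorem trace_tensorFam [DecidableEq k] [Fintype ι] (A : k → Matrix ι ι ℂ) :
    (tensorFam A).trace = ∏ a, (A a).trace := by
  simp only [Matrix.trace, Matrix.diag, tensorFam, Matrix.of_apply, Fintype.prod_sum]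

theorem posSemidef_tensorFam [Finite ι] {A : k → Matrix ι ι ℂ} (hA : ∀ a, (A a).PosSemidef) :
    (tensorFam A).PosSemidef := by
  classical
  cases nonempty_fintype ι
  choose B hB using fun a => CStarAlgebra.nonneg_iff_eq_star_mul_self.mp (hA a).nonneg
  have hsq : tensorFam A = (tensorFam B).conjTranspose * tensorFam B := by
    rw [conjTranspose_tensorFam, ← tensorFam_mul]
    exact congrArg tensorFam (funext hB)
  exact hsq ▸ Matrix.posSemidef_conjTranspose_mul_self _

theorem isDensity_tensorFam [DecidableEq k] [Fintype ι] {A : k → Matrix ι ι ℂ}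
    (hA : ∀ a, IsDensity (A a)) : IsDensity (tensorFam A) := by
  refine ⟨posSemidef_tensorFam fun a => (hA a).1, ?_⟩
  rw [trace_tensorFam]
  exact prod_eq_one fun a _ => (hA a).2

end Tensor

section BlockKronecker

variable {ι : Type*} {l m : ℕ}

/-- The tensor product of an operator on the first `l` sites with one on the last `m` sites of a
chain of `l + m` sites, in the coordinates used by `tensorFam`. -/
def blockKronecker (A : Matrix (Fin l → ι) (Fin l → ι) ℂ) (B : Matrix (Fin m → ι) (Fin m → ι) ℂ) :
    Matrix (Fin (l + m) → ι) (Fin (l + m) → ι) ℂ :=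
  (A ⊗ₖ B).submatrix (Fin.appendEquiv l m).symm (Fin.appendEquiv l m).symm

theorem posSemidef_blockKronecker [Finite ι] {A : Matrix (Fin l → ι) (Fin l → ι) ℂ}
    {B : Matrix (Fin m → ι) (Fin m → ι) ℂ} (hA : A.PosSemidef) (hB : B.PosSemidef) :
    (blockKronecker A B).PosSemidef :=
  (hA.kronecker hB).submatrix _

theorem blockKronecker_one [DecidableEq ι] :
    blockKronecker (1 : Matrix (Fin l → ι) (Fin l → ι) ℂ)
      (1 : Matrix (Fin m → ι) (Fin m → ι) ℂ) = 1 := by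
  simp [blockKronecker]

theorem blockKronecker_sum_right {κ : Type*} (s : Finset κ) (A : Matrix (Fin l → ι) (Fin l → ι) ℂ)
    (B : κ → Matrix (Fin m → ι) (Fin m → ι) ℂ) :
    blockKronecker A (∑ i ∈ s, B i) = ∑ i ∈ s, blockKronecker A (B i) := by
  ext x y
  simp [blockKronecker, Matrix.sum_apply, mul_sum]

theorem blockKronecker_sum_left {κ : Type*} (s : Finset κ)
    (A : κ → Matrix (Fin l → ι) (Fin l → ι) ℂ) (B : Matrix (Fin m → ι) (Fin m → ι) ℂ) :
    blockKronecker (∑ i ∈ s, A i) B = ∑ i ∈ s, blockKronecker (A i) B := by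
  ext x y
  simp [blockKronecker, Matrix.sum_apply, sum_mul]

theorem tensorFam_eq_blockKronecker (r : Fin (l + m) → Matrix ι ι ℂ) :
    tensorFam r = blockKronecker (tensorFam fun a => r (Fin.castAdd m a))
      (tensorFam fun a => r (Fin.natAdd l a)) := by
  ext x y
  simp [blockKronecker, tensorFam, Fin.prod_univ_add]

theorem trace_blockKronecker_mul [Fintype ι] (A C : Matrix (Fin l → ι) (Fin l → ι) ℂ)
    (B D : Matrix (Fin m → ι) (Fin m → ι) ℂ) :
    (blockKronecker A B * blockKronecker C D).trace = (A * C).trace * (B * D).trace := by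
  rw [blockKronecker, blockKronecker, Matrix.submatrix_mul_equiv, ← Matrix.mul_kronecker_mul,
    ← Matrix.trace_kronecker]
  exact Fintype.sum_equiv (Fin.appendEquiv l m).symm _ _ fun _ => rfl

end BlockKronecker

section Sampling

variable {Γ κ T : Type*} [Fintype Γ] {w : Γ → ℝ}

theorem exists_le_of_sum_mul_le (hw : w ∈ stdSimplex ℝ Γ) {f : Γ → ℝ} {b : ℝ}
    (hf : ∑ γ, w γ * f γ ≤ b) : ∃ γ, f γ ≤ b := by
  obtain ⟨γ, -, hγ⟩ := (concaveOn_id (𝕜 := ℝ) convex_univ).exists_le_of_centerMass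
    (t := univ) (p := f) (fun γ _ => hw.1 γ) (by rw [hw.2]; exact one_pos) fun _ _ => Set.mem_univ _
  rw [centerMass_eq_of_sum_1 _ _ hw.2] at hγ
  exact ⟨γ, hγ.trans hf⟩

theorem sum_mul_le_one (hw : w ∈ stdSimplex ℝ Γ) {f : Γ → ℝ} (hf : ∀ γ, f γ ≤ 1) :
    ∑ γ, w γ * f γ ≤ 1 :=
  hw.2 ▸ sum_le_sum fun γ _ => mul_le_of_le_one_right (hw.1 γ) (hf γ)

theorem prod_comp_mem_stdSimplex [Fintype κ] [DecidableEq κ] (hw : w ∈ stdSimplex ℝ Γ) :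
    (fun c : κ → Γ => ∏ i, w (c i)) ∈ stdSimplex ℝ (κ → Γ) :=
  ⟨fun c => prod_nonneg fun i _ => hw.1 (c i), by
    rw [← Fintype.prod_sum fun (_ : κ) γ => w γ]
    exact prod_eq_one fun _ _ => hw.2⟩

theorem exp_le_one_add_two_mul {x : ℝ} (h0 : 0 ≤ x) (h1 : x ≤ 1) : Real.exp x ≤ 1 + 2 * x := by
  have hchord := convexOn_exp.2 (Set.mem_univ 0) (Set.mem_univ 1) (sub_nonneg.mpr h1) h0 (by ring)
  simp only [smul_eq_mul, mul_zero, mul_one, zero_add, Real.exp_zero] at hchord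
  nlinarith [Real.exp_one_lt_three]

theorem sum_mul_exp_le (hw : w ∈ stdSimplex ℝ Γ) {f : Γ → ℝ} (hf : ∀ γ, f γ ∈ Set.Icc 0 1) {b : ℝ}
    (hb : ∑ γ, w γ * f γ ≤ b) : ∑ γ, w γ * Real.exp (f γ) ≤ Real.exp (2 * b) :=
  calc ∑ γ, w γ * Real.exp (f γ)
      ≤ ∑ γ, w γ * (1 + 2 * f γ) := sum_le_sum fun γ _ =>
        mul_le_mul_of_nonneg_left (exp_le_one_add_two_mul (hf γ).1 (hf γ).2) (hw.1 γ)
    _ = 1 + 2 * ∑ γ, w γ * f γ := by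
        simp only [mul_add, mul_one, sum_add_distrib, hw.2, mul_left_comm _ (2 : ℝ), ← mul_sum]
    _ ≤ 2 * b + 1 := by linarith
    _ ≤ Real.exp (2 * b) := Real.add_one_le_exp _

variable [Fintype κ] [Fintype T]

theorem exists_sum_exp_sum_le (hw : w ∈ stdSimplex ℝ Γ) {e : Γ → T → ℝ}
    (he : ∀ γ t, e γ t ∈ Set.Icc 0 1) {b : ℝ} (hb : ∀ t, ∑ γ, w γ * e γ t ≤ b) :
    ∃ c : κ → Γ, ∑ t, Real.exp (∑ i, e (c i) t) ≤
      Fintype.card T * Real.exp (2 * b * Fintype.card κ) := by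
  classical
  refine exists_le_of_sum_mul_le (prod_comp_mem_stdSimplex hw) ?_
  calc ∑ c : κ → Γ, (∏ i, w (c i)) * ∑ t, Real.exp (∑ i, e (c i) t)
      = ∑ t, ∑ c : κ → Γ, ∏ i, w (c i) * Real.exp (e (c i) t) := by
        simp only [mul_sum, Real.exp_sum, prod_mul_distrib]
        exact sum_comm
    _ = ∑ t, (∑ γ, w γ * Real.exp (e γ t)) ^ Fintype.card κ := sum_congr rfl fun t _ => by
        rw [← Fintype.prod_sum fun (_ : κ) γ => w γ * Real.exp (e γ t), prod_const, card_univ]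
    _ ≤ ∑ _t : T, Real.exp (2 * b) ^ Fintype.card κ := sum_le_sum fun t _ =>
        pow_le_pow_left₀ (sum_nonneg fun γ _ => mul_nonneg (hw.1 γ) (Real.exp_pos _).le)
          (sum_mul_exp_le hw (he · t) (hb t)) _
    _ = Fintype.card T * Real.exp (2 * b * Fintype.card κ) := by
        rw [sum_const, card_univ, nsmul_eq_mul, ← Real.exp_nat_mul, mul_comm (2 * b)]

theorem exists_expect_le (hw : w ∈ stdSimplex ℝ Γ) {e : Γ → T → ℝ}
    (he : ∀ γ t, e γ t ∈ Set.Icc 0 1) {b : ℝ} (hb0 : 0 ≤ b) (hb : ∀ t, ∑ γ, w γ * e γ t ≤ b)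
    (hκ : Real.log (Fintype.card T) ≤ b * Fintype.card κ) :
    ∃ c : κ → Γ, ∀ t, 𝔼 i, e (c i) t ≤ 3 * b := by
  obtain ⟨c, hc⟩ := exists_sum_exp_sum_le (κ := κ) hw he hb
  refine ⟨c, fun t => ?_⟩
  have hT : (0 : ℝ) < Fintype.card T := by exact_mod_cast Fintype.card_pos_iff.mpr ⟨t⟩
  have hexp : Real.exp (∑ i, e (c i) t) ≤ Real.exp (3 * b * Fintype.card κ) :=
    calc Real.exp (∑ i, e (c i) t)
        ≤ ∑ t, Real.exp (∑ i, e (c i) t) :=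
          single_le_sum (f := fun t => Real.exp (∑ i, e (c i) t))
            (fun _ _ => (Real.exp_pos _).le) (mem_univ t)
      _ ≤ Fintype.card T * Real.exp (2 * b * Fintype.card κ) := hc
      _ ≤ Real.exp (b * Fintype.card κ) * Real.exp (2 * b * Fintype.card κ) := by
          gcongr
          exact (Real.log_le_iff_le_exp hT).mp hκ
      _ = Real.exp (3 * b * Fintype.card κ) := by rw [← Real.exp_add]; ring_nf
  rw [Fintype.expect_eq_sum_div_card]
  exact div_le_of_le_mul₀ (by positivity) (by positivity) (Real.exp_le_exp.mp hexp)

theorem expect_mem_Icc {f : κ → ℝ} (hf : ∀ i, f i ∈ Set.Icc 0 1) : 𝔼 i, f i ∈ Set.Icc 0 1 := by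
  refine ⟨expect_nonneg fun i _ => (hf i).1, ?_⟩
  rcases isEmpty_or_nonempty κ with _ | _
  · simp
  · exact expect_le univ_nonempty fun i _ => (hf i).2

theorem exists_expect_expect_le {Γ' κ' : Type*} [Fintype Γ'] [Fintype κ'] {w' : Γ' → ℝ}
    (hw : w ∈ stdSimplex ℝ Γ) (hw' : w' ∈ stdSimplex ℝ Γ') {e : Γ → Γ' → T → ℝ}
    (he : ∀ γ γ' t, e γ γ' t ∈ Set.Icc 0 1) {b : ℝ} (hb0 : 0 ≤ b)
    (hb : ∀ t, ∑ γ, ∑ γ', w γ * w' γ' * e γ γ' t ≤ b)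
    (hκ : Real.log (Fintype.card T) ≤ b * Fintype.card κ)
    (hκ' : Real.log (Fintype.card T) ≤ b * Fintype.card κ') :
    ∃ (c : κ → Γ) (c' : κ' → Γ'), ∀ t, 𝔼 i, 𝔼 j, e (c i) (c' j) t ≤ 9 * b := by
  obtain ⟨c, hc⟩ := exists_expect_le (κ := κ) hw
    (e := fun γ t => ∑ γ', w' γ' * e γ γ' t)
    (fun γ t => ⟨sum_nonneg fun γ' _ => mul_nonneg (hw'.1 γ') (he γ γ' t).1,
      sum_mul_le_one hw' fun γ' => (he γ γ' t).2⟩)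
    hb0 (fun t => by simpa only [mul_sum, mul_assoc] using hb t) hκ
  obtain ⟨c', hc'⟩ := exists_expect_le (κ := κ') hw'
    (e := fun γ' t => 𝔼 i, e (c i) γ' t) (fun γ' t => expect_mem_Icc fun i => he (c i) γ' t)
    (b := 3 * b) (by positivity)
    (fun t => by simpa only [mul_expect, expect_sum_comm] using hc t)
    (hκ'.trans (by gcongr; linarith))
  exact ⟨c, c', fun t => by rw [expect_comm]; linarith [hc' t]⟩

end Sampling

section BlockCode

variable {𝒳 𝒴 𝒮 : Type*} {d n l m : ℕ}

/-- A deterministic code of block length `n` for two senders with message sets `I` and `J`; the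
decoding operators `dec i j` form a POVM. -/
structure BlockCode (𝒳 𝒴 : Type*) (d n : ℕ) (I J : Type*) [Fintype I] [Fintype J] where
  enc₁ : I → Fin n → 𝒳
  enc₂ : J → Fin n → 𝒴
  dec : I → J → Matrix (Fin n → Fin d) (Fin n → Fin d) ℂ
  posSemidef_dec : ∀ i j, (dec i j).PosSemidef
  sum_dec : ∑ i, ∑ j, dec i j = 1

/-- A family of block codes indexed by keys `γ₁ : Γ₁` and `γ₂ : Γ₂`, where the encoder of each
sender depends on that sender's key only. With a distribution on each key set it is a random
code. -/
structure KeyedCode (𝒳 𝒴 : Type*) (d n : ℕ) (Γ₁ Γ₂ I J : Type*) [Fintype I] [Fintype J] where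
  enc₁ : Γ₁ → I → Fin n → 𝒳
  enc₂ : Γ₂ → J → Fin n → 𝒴
  dec : Γ₁ → Γ₂ → I → J → Matrix (Fin n → Fin d) (Fin n → Fin d) ℂ
  posSemidef_dec : ∀ γ₁ γ₂ i j, (dec γ₁ γ₂ i j).PosSemidef
  sum_dec : ∀ γ₁ γ₂, ∑ i, ∑ j, dec γ₁ γ₂ i j = 1

variable {Γ₁ Γ₂ I J K L : Type*} [Fintype I] [Fintype J] [Fintype K] [Fintype L]
  (ρ : 𝒳 → 𝒴 → 𝒮 → Matrix (Fin d) (Fin d) ℂ)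

namespace BlockCode

theorem exists_iff {p : BlockCode 𝒳 𝒴 d n I J → Prop} :
    (∃ C, p C) ↔ ∃ (f₁ : I → Fin n → 𝒳) (f₂ : J → Fin n → 𝒴)
      (D : I → J → Matrix (Fin n → Fin d) (Fin n → Fin d) ℂ) (hD : ∀ i j, (D i j).PosSemidef)
      (hsum : ∑ i, ∑ j, D i j = 1), p ⟨f₁, f₂, D, hD, hsum⟩ :=
  ⟨fun ⟨C, hC⟩ => ⟨C.enc₁, C.enc₂, C.dec, C.posSemidef_dec, C.sum_dec, hC⟩,
    fun ⟨_, _, _, _, _, hC⟩ => ⟨_, hC⟩⟩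

/-- The probability that messages `i` and `j` are decoded correctly under the states `s`. -/
def successProb (C : BlockCode 𝒳 𝒴 d n I J) (s : Fin n → 𝒮) (i : I) (j : J) : ℝ :=
  (C.dec i j * tensorFam fun a => ρ (C.enc₁ i a) (C.enc₂ j a) (s a)).trace.re

/-- The average error `ē(C, sⁿ)` over uniformly distributed messages. It is `1` if there are no
messages, as averages over empty types vanish. -/
def avgError (C : BlockCode 𝒳 𝒴 d n I J) (s : Fin n → 𝒮) : ℝ :=
  1 - 𝔼 i, 𝔼 j, C.successProb ρ s i j

theorem avgError_eq_one_sub_sum (C : BlockCode 𝒳 𝒴 d n I J) (s : Fin n → 𝒮) :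
    C.avgError ρ s = 1 - (1 / ((Fintype.card I : ℝ) * (Fintype.card J : ℝ))) *
      ∑ i, ∑ j, C.successProb ρ s i j := by
  simp only [avgError, Fintype.expect_eq_sum_div_card, ← sum_div]
  ring

/-- Relabelling of the messages. -/
def reindex (C : BlockCode 𝒳 𝒴 d n I J) (e₁ : I ≃ K) (e₂ : J ≃ L) : BlockCode 𝒳 𝒴 d n K L where
  enc₁ i := C.enc₁ (e₁.symm i)
  enc₂ j := C.enc₂ (e₂.symm j)
  dec i j := C.dec (e₁.symm i) (e₂.symm j)
  posSemidef_dec _ _ := C.posSemidef_dec _ _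
  sum_dec := by
    rw [Equiv.sum_comp e₁.symm fun i => ∑ j, C.dec i (e₂.symm j)]
    simp only [Equiv.sum_comp e₂.symm, C.sum_dec]

theorem avgError_reindex (C : BlockCode 𝒳 𝒴 d n I J) (e₁ : I ≃ K) (e₂ : J ≃ L) (s : Fin n → 𝒮) :
    (C.reindex e₁ e₂).avgError ρ s = C.avgError ρ s :=
  congrArg (1 - ·) (Fintype.expect_equiv e₁.symm _ _ fun _ =>
    Fintype.expect_equiv e₂.symm _ _ fun _ => rfl)

end BlockCode

namespace KeyedCode

/-- The block code used under the keys `γ₁` and `γ₂`. -/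
def code (F : KeyedCode 𝒳 𝒴 d n Γ₁ Γ₂ I J) (γ₁ : Γ₁) (γ₂ : Γ₂) : BlockCode 𝒳 𝒴 d n I J where
  enc₁ := F.enc₁ γ₁
  enc₂ := F.enc₂ γ₂
  dec := F.dec γ₁ γ₂
  posSemidef_dec := F.posSemidef_dec γ₁ γ₂
  sum_dec := F.sum_dec γ₁ γ₂

/-- The keyed code that uses the keys `c₁ k` and `c₂ l` of `F` under the keys `k` and `l`. -/
def comap (F : KeyedCode 𝒳 𝒴 d n Γ₁ Γ₂ I J) (c₁ : K → Γ₁) (c₂ : L → Γ₂) :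
    KeyedCode 𝒳 𝒴 d n K L I J where
  enc₁ k := F.enc₁ (c₁ k)
  enc₂ l := F.enc₂ (c₂ l)
  dec k l := F.dec (c₁ k) (c₂ l)
  posSemidef_dec _ _ := F.posSemidef_dec _ _
  sum_dec _ _ := F.sum_dec _ _

/-- The expected average error `Ē(sⁿ)` for independent keys with distributions `w₁` and `w₂`. -/
def expectedError [Fintype Γ₁] [Fintype Γ₂] (F : KeyedCode 𝒳 𝒴 d n Γ₁ Γ₂ I J) (w₁ : Γ₁ → ℝ)
    (w₂ : Γ₂ → ℝ) (s : Fin n → 𝒮) : ℝ :=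
  ∑ γ₁, ∑ γ₂, w₁ γ₁ * w₂ γ₂ * (F.code γ₁ γ₂).avgError ρ s

end KeyedCode

namespace BlockCode

/-- The code that transmits keys by `C` on the first `l` sites and then messages on the last `m`
sites by the member of `F` which those keys select. -/
def concat (C : BlockCode 𝒳 𝒴 d l K L) (F : KeyedCode 𝒳 𝒴 d m K L I J) :
    BlockCode 𝒳 𝒴 d (l + m) (K × I) (L × J) where
  enc₁ p := Fin.append (C.enc₁ p.1) (F.enc₁ p.1 p.2)
  enc₂ q := Fin.append (C.enc₂ q.1) (F.enc₂ q.1 q.2)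
  dec p q := blockKronecker (C.dec p.1 q.1) (F.dec p.1 q.1 p.2 q.2)
  posSemidef_dec _ _ := posSemidef_blockKronecker (C.posSemidef_dec _ _) (F.posSemidef_dec _ _ _ _)
  sum_dec := by
    simp only [Fintype.sum_prod_type, sum_comm (s := univ (α := I)) (t := univ (α := L)),
      ← blockKronecker_sum_right, F.sum_dec, ← blockKronecker_sum_left, C.sum_dec,
      blockKronecker_one]

variable {ρ}

theorem successProb_nonneg (hρ : ∀ x y s, IsDensity (ρ x y s)) (C : BlockCode 𝒳 𝒴 d n I J)
    (s : Fin n → 𝒮) (i : I) (j : J) :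
    0 ≤ C.successProb ρ s i j :=
  (Complex.le_def.mp (trace_mul_nonneg_of_posSemidef (C.posSemidef_dec i j)
    (isDensity_tensorFam fun _ => hρ _ _ _).1)).1

theorem successProb_le_one (hρ : ∀ x y s, IsDensity (ρ x y s)) (C : BlockCode 𝒳 𝒴 d n I J)
    (s : Fin n → 𝒮) (i : I) (j : J) :
    C.successProb ρ s i j ≤ 1 :=
  re_trace_mul_le_one_of_sum_eq_one (D := fun p : I × J => C.dec p.1 p.2)
    (fun p => C.posSemidef_dec p.1 p.2) (by rw [Fintype.sum_prod_type, C.sum_dec])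
    (isDensity_tensorFam fun _ => hρ _ _ _) (i, j)

theorem avgError_mem_Icc (hρ : ∀ x y s, IsDensity (ρ x y s)) (C : BlockCode 𝒳 𝒴 d n I J)
    (s : Fin n → 𝒮) :
    C.avgError ρ s ∈ Set.Icc 0 1 := by
  obtain ⟨h0, h1⟩ := expect_mem_Icc fun i => expect_mem_Icc fun j =>
    ⟨C.successProb_nonneg hρ s i j, C.successProb_le_one hρ s i j⟩
  exact ⟨sub_nonneg.mpr h1, sub_le_self 1 h0⟩

theorem successProb_concat (hρ : ∀ x y s, IsDensity (ρ x y s)) (C : BlockCode 𝒳 𝒴 d l K L)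
    (F : KeyedCode 𝒳 𝒴 d m K L I J) (s : Fin (l + m) → 𝒮) (p : K × I) (q : L × J) :
    (C.concat F).successProb ρ s p q =
      C.successProb ρ (fun a => s (Fin.castAdd m a)) p.1 q.1 *
        (F.code p.1 q.1).successProb ρ (fun a => s (Fin.natAdd l a)) p.2 q.2 := by
  have him := (Complex.le_def.mp (trace_mul_nonneg_of_posSemidef (C.posSemidef_dec p.1 q.1)
    (isDensity_tensorFam fun a => hρ (C.enc₁ p.1 a) (C.enc₂ q.1 a) (s (Fin.castAdd m a))).1)).2
  rw [successProb, tensorFam_eq_blockKronecker]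
  simp only [concat, trace_blockKronecker_mul, Fin.append_left, Fin.append_right, Complex.mul_re,
    ← him, Complex.zero_im, zero_mul, sub_zero]
  rfl

theorem avgError_concat_le (hρ : ∀ x y s, IsDensity (ρ x y s)) (C : BlockCode 𝒳 𝒴 d l K L)
    (F : KeyedCode 𝒳 𝒴 d m K L I J) (s : Fin (l + m) → 𝒮) :
    (C.concat F).avgError ρ s ≤ C.avgError ρ (fun a => s (Fin.castAdd m a)) +
      𝔼 k, 𝔼 l', (F.code k l').avgError ρ (fun a => s (Fin.natAdd l a)) := by
  set s₁ : Fin l → 𝒮 := fun a => s (Fin.castAdd m a)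
  set s₂ : Fin m → 𝒮 := fun a => s (Fin.natAdd l a)
  have hmul : 𝔼 p, 𝔼 q, (C.concat F).successProb ρ s p q =
      𝔼 k, 𝔼 l', C.successProb ρ s₁ k l' * (1 - (F.code k l').avgError ρ s₂) := by
    simp only [successProb_concat hρ, ← univ_product_univ, expect_product,
      expect_comm (univ (α := I)) (univ (α := L)), ← mul_expect, avgError, sub_sub_cancel, s₁, s₂]
  have hunion : ∀ k l', C.successProb ρ s₁ k l' - (F.code k l').avgError ρ s₂ ≤
      C.successProb ρ s₁ k l' * (1 - (F.code k l').avgError ρ s₂) := fun k l' => by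
    nlinarith [C.successProb_le_one hρ s₁ k l', ((F.code k l').avgError_mem_Icc hρ s₂).1]
  have hle := expect_le_expect (s := univ) fun k _ =>
    expect_le_expect (s := univ) fun l' _ => hunion k l'
  simp only [expect_sub_distrib] at hle
  rw [avgError, hmul, avgError]
  linarith

/-- Elimination of randomness: the sampled keys are the messages of the prefix code `C`. -/
theorem exists_avgError_lt [Fintype 𝒮] [Fintype Γ₁] [Fintype Γ₂]
    (hρ : ∀ x y s, IsDensity (ρ x y s)) (C : BlockCode 𝒳 𝒴 d l K L)
    (F : KeyedCode 𝒳 𝒴 d m Γ₁ Γ₂ I J) {w₁ : Γ₁ → ℝ} {w₂ : Γ₂ → ℝ} (hw₁ : w₁ ∈ stdSimplex ℝ Γ₁)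
    (hw₂ : w₂ ∈ stdSimplex ℝ Γ₂) {b : ℝ} (hb : 0 ≤ b) (hC : ∀ s, C.avgError ρ s < b)
    (hF : ∀ s, F.expectedError ρ w₁ w₂ s ≤ b)
    (hK : m * Real.log (Fintype.card 𝒮) ≤ b * Fintype.card K)
    (hL : m * Real.log (Fintype.card 𝒮) ≤ b * Fintype.card L) :
    ∃ C' : BlockCode 𝒳 𝒴 d (l + m) (K × I) (L × J), ∀ s, C'.avgError ρ s < 10 * b := by
  classical
  have hlog : Real.log (Fintype.card (Fin m → 𝒮)) = m * Real.log (Fintype.card 𝒮) := by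
    rw [Fintype.card_fun, Fintype.card_fin, Nat.cast_pow, Real.log_pow]
  obtain ⟨c₁, c₂, hc⟩ := exists_expect_expect_le hw₁ hw₂
    (fun γ₁ γ₂ s => (F.code γ₁ γ₂).avgError_mem_Icc hρ s) hb hF (hlog ▸ hK) (hlog ▸ hL)
  refine ⟨C.concat (F.comap c₁ c₂), fun s =>
    (C.avgError_concat_le hρ (F.comap c₁ c₂) s).trans_lt ?_⟩
  have hprefix := hC fun a => s (Fin.castAdd m a)
  have hkeys : 𝔼 k, 𝔼 l', ((F.comap c₁ c₂).code k l').avgError ρ (fun a => s (Fin.natAdd l a)) ≤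
    9 * b := hc fun a => s (Fin.natAdd l a)
  linarith

end BlockCode

end BlockCode

section Rate

/-- The rate of a code of block length `n` with `M` messages; it is `0` if `n = 0` or `M = 0`. -/
def rate (n M : ℕ) : ℝ :=
  (1 / (n : ℝ)) * Real.logb 2 M

theorem lt_rate_iff {n : ℕ} (hn : 0 < n) {M : ℕ} {R : ℝ} :
    R < rate n M ↔ n * R < Real.logb 2 M := by
  rw [rate, one_div, lt_inv_mul_iff₀ (by exact_mod_cast hn)]

theorem lt_rate_add {l m q M M' : ℕ} {R ε : ℝ} (hm : 0 < m) (hM' : 0 < M') (hε : 0 ≤ ε)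
    (hR : R ≤ q * ε) (hq : q * l ≤ l + m) (h : R - ε < rate m M) :
    R - 2 * ε < rate (l + m) (M' * M) := by
  rw [lt_rate_iff hm] at h
  rw [lt_rate_iff (by omega)]
  have hlog : Real.logb 2 M ≤ Real.logb 2 (M' * M : ℕ) := by
    rcases M.eq_zero_or_pos with rfl | hM
    · simp
    · exact Real.logb_le_logb_of_le one_lt_two (by exact_mod_cast hM)
        (by exact_mod_cast Nat.le_mul_of_pos_left M hM')
  have hloss : l * R ≤ (l + m) * ε :=
    calc l * R ≤ l * (q * ε) := by gcongr
      _ = (q * l : ℕ) * ε := by push_cast; ring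
      _ ≤ (l + m : ℕ) * ε := by gcongr
      _ = (l + m) * ε := by push_cast; ring
  rw [Nat.cast_add]
  nlinarith [mul_nonneg l.cast_nonneg hε]

theorem eventually_mul_le_of_lt_rate {c : ℝ} (hc : 0 < c) (a : ℝ) :
    ∀ᶠ l : ℕ in atTop, ∀ M : ℕ, c < rate l M → 0 < M ∧ a * l ≤ M := by
  have hexp := (isLittleO_coe_const_pow_of_one_lt (R := ℝ)
    (Real.one_lt_rpow one_lt_two hc)).def (inv_pos.mpr (by positivity : 0 < |a| + 1))
  filter_upwards [hexp, eventually_gt_atTop 0] with l hlin hl M hM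
  have hM0 : 0 < M := by
    refine Nat.pos_of_ne_zero ?_
    rintro rfl
    simp only [rate, Nat.cast_zero, Real.logb_zero, mul_zero] at hM
    exact hM.not_gt hc
  refine ⟨hM0, ?_⟩
  have hpow : ((2 : ℝ) ^ c) ^ l ≤ M := by
    rw [← Real.rpow_mul_natCast zero_le_two, mul_comm,
      ← Real.le_logb_iff_rpow_le one_lt_two (by exact_mod_cast hM0)]
    exact ((lt_rate_iff hl).mp hM).le
  rw [Real.norm_natCast, norm_pow, Real.norm_rpow_of_nonneg zero_le_two, Real.norm_two,
    le_inv_mul_iff₀ (by positivity)] at hlin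
  calc a * l ≤ (|a| + 1) * l := by gcongr; linarith [le_abs_self a]
    _ ≤ M := hlin.trans hpow

theorem eventually_exists_add_eq {p r : ℕ → Prop} (hp : ∀ᶠ l in atTop, p l)
    (hr : ∀ᶠ m in atTop, r m) {q : ℕ} (hq : 2 ≤ q) :
    ∀ᶠ n in atTop, ∃ l m, l + m = n ∧ p l ∧ r m ∧ q * l ≤ l + m ∧ m ≤ 2 * q * l := by
  have hdiv : Tendsto (fun n : ℕ => n / q) atTop atTop := Nat.tendsto_div_const_atTop (by omega)
  have hle : ∀ n, 2 * (n / q) ≤ n := fun n =>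
    (Nat.mul_le_mul_right _ hq).trans (Nat.mul_div_le n q)
  have hsub : Tendsto (fun n : ℕ => n - n / q) atTop atTop :=
    tendsto_atTop_mono (fun n => by have := hle n; omega) hdiv
  filter_upwards [hdiv.eventually hp, hsub.eventually hr, hdiv.eventually_ge_atTop 1]
    with n hpn hrn hn
  refine ⟨n / q, n - n / q, by have := hle n; omega, hpn, hrn, ?_, ?_⟩
  · have := Nat.mul_div_le n q
    have := hle n
    omega
  · have := Nat.lt_mul_div_succ n (show 0 < q by omega)
    nlinarith [Nat.sub_le n (n / q)]

end Rate

theorem ciSup_lt_iff_forall_lt {ι α : Type*} [Finite ι] [Nonempty ι]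
    [ConditionallyCompleteLinearOrder α] {f : ι → α} {b : α} : ⨆ i, f i < b ↔ ∀ i, f i < b := by
  refine ⟨fun h i => (le_ciSup (Set.finite_range f).bddAbove i).trans_lt h, fun h => ?_⟩
  obtain ⟨i, hi⟩ := exists_eq_ciSup_of_finite (f := f)
  exact hi ▸ h i

section Capacity

variable {𝒳 𝒴 𝒮 : Type*} {d : ℕ} {ρ : 𝒳 → 𝒴 → 𝒮 → Matrix (Fin d) (Fin d) ℂ} {R₁ R₂ : ℝ}

theorem AchievableDet.achievableRand (h : AchievableDet ρ R₁ R₂) : AchievableRand ρ R₁ R₂ := by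
  refine ⟨h.1, h.2.1, fun β hβ δ₁ hδ₁ δ₂ hδ₂ => ?_⟩
  obtain ⟨N, hN⟩ := h.2.2 β hβ δ₁ hδ₁ δ₂ hδ₂
  refine ⟨N, fun n hn => ?_⟩
  obtain ⟨M₁, M₂, f₁, f₂, D, hD, hsum, hrate₁, hrate₂, herr⟩ := hN n hn
  refine ⟨M₁, M₂, 1, 1, fun _ => 1, fun _ => 1, fun _ => f₁, fun _ => f₂, fun _ _ => D,
    by simp, by simp, by simp, by simp, fun _ _ => hD, fun _ _ => hsum, hrate₁, hrate₂, ?_⟩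
  simpa only [univ_unique, sum_singleton, one_mul] using herr

variable [Finite 𝒮] [Nonempty 𝒮]

theorem achievableDet_iff : AchievableDet ρ R₁ R₂ ↔ 0 ≤ R₁ ∧ 0 ≤ R₂ ∧
    ∀ β > 0, ∀ δ₁ > 0, ∀ δ₂ > 0, ∀ᶠ n in atTop,
      ∃ (M₁ M₂ : ℕ) (C : BlockCode 𝒳 𝒴 d n (Fin M₁) (Fin M₂)),
        R₁ - δ₁ < rate n M₁ ∧ R₂ - δ₂ < rate n M₂ ∧ ∀ s, C.avgError ρ s < β := by
  simp only [AchievableDet, eventually_atTop, ciSup_lt_iff_forall_lt, BlockCode.exists_iff,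
    BlockCode.avgError_eq_one_sub_sum, BlockCode.successProb, Fintype.card_fin, exists_prop, rate,
    ge_iff_le, gt_iff_lt]

theorem AchievableRand.eventually_exists_keyedCode (h : AchievableRand ρ R₁ R₂) {β δ₁ δ₂ : ℝ}
    (hβ : 0 < β) (hδ₁ : 0 < δ₁) (hδ₂ : 0 < δ₂) : ∀ᶠ n in atTop,
      ∃ (M₁ M₂ k₁ k₂ : ℕ) (F : KeyedCode 𝒳 𝒴 d n (Fin k₁) (Fin k₂) (Fin M₁) (Fin M₂))
        (w₁ : Fin k₁ → ℝ) (w₂ : Fin k₂ → ℝ), w₁ ∈ stdSimplex ℝ _ ∧ w₂ ∈ stdSimplex ℝ _ ∧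
        R₁ - δ₁ < rate n M₁ ∧ R₂ - δ₂ < rate n M₂ ∧ ∀ s, F.expectedError ρ w₁ w₂ s < β := by
  simp only [KeyedCode.expectedError, BlockCode.avgError_eq_one_sub_sum, Fintype.card_fin,
    ← ciSup_lt_iff_forall_lt]
  obtain ⟨N, hN⟩ := h.2.2 β hβ δ₁ hδ₁ δ₂ hδ₂
  filter_upwards [eventually_ge_atTop N] with n hn
  obtain ⟨M₁, M₂, k₁, k₂, w₁, w₂, f₁, f₂, D, hw₁, hw₁', hw₂, hw₂', hD, hsum, hcode⟩ := hN n hn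
  exact ⟨M₁, M₂, k₁, k₂, ⟨f₁, f₂, D, hD, hsum⟩, w₁, w₂, ⟨hw₁, hw₁'⟩, ⟨hw₂, hw₂'⟩, hcode⟩

theorem AchievableDet.eventually_exists_card_ge (h : AchievableDet ρ R₁ R₂) (hR₁ : 0 < R₁)
    (hR₂ : 0 < R₂) {b : ℝ} (hb : 0 < b) (a : ℝ) : ∀ᶠ l in atTop,
      ∃ (M₁ M₂ : ℕ) (C : BlockCode 𝒳 𝒴 d l (Fin M₁) (Fin M₂)),
        (0 < M₁ ∧ a * l ≤ M₁) ∧ (0 < M₂ ∧ a * l ≤ M₂) ∧ ∀ s, C.avgError ρ s < b := by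
  filter_upwards [(achievableDet_iff.mp h).2.2 b hb (R₁ / 2) (half_pos hR₁) (R₂ / 2) (half_pos hR₂),
    eventually_mul_le_of_lt_rate (half_pos hR₁) a, eventually_mul_le_of_lt_rate (half_pos hR₂) a]
    with l ⟨M₁, M₂, C, hrate₁, hrate₂, herr⟩ hlarge₁ hlarge₂
  rw [sub_half] at hrate₁ hrate₂
  exact ⟨M₁, M₂, C, hlarge₁ M₁ hrate₁, hlarge₂ M₂ hrate₂, herr⟩

theorem AchievableRand.achievableDet_of_pos (hρ : ∀ x y s, IsDensity (ρ x y s)) {P₁ P₂ : ℝ}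
    (hR : AchievableRand ρ R₁ R₂) (hP : AchievableDet ρ P₁ P₂) (hP₁ : 0 < P₁) (hP₂ : 0 < P₂) :
    AchievableDet ρ R₁ R₂ := by
  cases nonempty_fintype 𝒮
  refine achievableDet_iff.mpr ⟨hR.1, hR.2.1, fun β hβ δ₁ hδ₁ δ₂ hδ₂ => ?_⟩
  obtain ⟨q, hq, hq₁, hq₂⟩ : ∃ q : ℕ, 2 ≤ q ∧ R₁ ≤ q * (δ₁ / 2) ∧ R₂ ≤ q * (δ₂ / 2) := by
    have hlarge (R : ℝ) {ε : ℝ} (hε : 0 < ε) : ∀ᶠ q : ℕ in atTop, R ≤ q * ε :=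
      (tendsto_natCast_atTop_atTop.atTop_mul_const hε).eventually_ge_atTop R
    exact ((eventually_ge_atTop 2).and
      ((hlarge R₁ (half_pos hδ₁)).and (hlarge R₂ (half_pos hδ₂)))).exists
  have hb : 0 < β / 10 := by positivity
  filter_upwards [eventually_exists_add_eq
    (hP.eventually_exists_card_ge hP₁ hP₂ hb (2 * q * Real.log (Fintype.card 𝒮) / (β / 10)))
    ((hR.eventually_exists_keyedCode hb (half_pos hδ₁) (half_pos hδ₂)).and
      (eventually_gt_atTop 0)) hq]
  rintro _ ⟨l, m, rfl, ⟨K₁, K₂, C, ⟨hK₁, hkeys₁⟩, ⟨hK₂, hkeys₂⟩, hC⟩,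
    ⟨⟨M₁, M₂, k₁, k₂, F, w₁, w₂, hw₁, hw₂, hrate₁, hrate₂, hF⟩, hm⟩, hql, hml⟩
  have henough {K : ℕ} (hK : 2 * q * Real.log (Fintype.card 𝒮) / (β / 10) * l ≤ K) :
      m * Real.log (Fintype.card 𝒮) ≤ β / 10 * Fintype.card (Fin K) :=
    calc m * Real.log (Fintype.card 𝒮)
        ≤ (2 * q * l : ℕ) * Real.log (Fintype.card 𝒮) := by gcongr
      _ = β / 10 * (2 * q * Real.log (Fintype.card 𝒮) / (β / 10) * l) := by
          push_cast; field_simp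
      _ ≤ β / 10 * Fintype.card (Fin K) := by rw [Fintype.card_fin]; gcongr
  obtain ⟨C', hC'⟩ := C.exists_avgError_lt hρ F hw₁ hw₂ hb.le hC (fun s => (hF s).le)
    (henough hkeys₁) (henough hkeys₂)
  refine ⟨K₁ * M₁, K₂ * M₂, C'.reindex finProdFinEquiv finProdFinEquiv, ?_, ?_, fun s => ?_⟩
  · simpa only [mul_div_cancel₀ δ₁ two_ne_zero] using
      lt_rate_add hm hK₁ (half_pos hδ₁).le hq₁ hql hrate₁
  · simpa only [mul_div_cancel₀ δ₂ two_ne_zero] using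
      lt_rate_add hm hK₂ (half_pos hδ₂).le hq₂ hql hrate₂
  · rw [BlockCode.avgError_reindex]
    linarith [hC' s]

end Capacity

theorem inter_interior_nonempty_of_subset {X : Type*} [TopologicalSpace X] {A Q : Set X}
    (hQ : IsClosed Q) (hAQ : A ⊆ Q) (hA : (interior (closure A)).Nonempty) :
    (A ∩ interior Q).Nonempty := by
  obtain ⟨x, hx⟩ := hA
  obtain ⟨p, hpInt, hpA⟩ := mem_closure_iff.mp (interior_subset hx) _ isOpen_interior hx
  exact ⟨p, hpA, interior_mono (closure_minimal hAQ hQ) hpInt⟩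

theorem statement13_general {𝒳 𝒴 𝒮 : Type*} [Finite 𝒮] [Nonempty 𝒮] {d : ℕ}
    (ρ : 𝒳 → 𝒴 → 𝒮 → Matrix (Fin d) (Fin d) ℂ) (hρ : ∀ x y s, IsDensity (ρ x y s))
    (hInt : (interior (Rd ρ)).Nonempty) : Rd ρ = Rr ρ := by
  have hquad : {r : ℝ × ℝ | AchievableDet ρ r.1 r.2} ⊆ Set.Ici 0 ×ˢ Set.Ici 0 :=
    fun r hr => ⟨hr.1, hr.2.1⟩
  obtain ⟨P, hP, hpos⟩ :=
    inter_interior_nonempty_of_subset (isClosed_Ici.prod isClosed_Ici) hquad hInt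
  rw [interior_prod_eq, interior_Ici] at hpos
  have hiff : ∀ r : ℝ × ℝ, AchievableDet ρ r.1 r.2 ↔ AchievableRand ρ r.1 r.2 := fun r =>
    ⟨AchievableDet.achievableRand, fun hr => hr.achievableDet_of_pos hρ hP hpos.1 hpos.2⟩
  simp only [Rd, Rr, hiff]

/-- For finite `𝒮`: if the interior of the deterministic code capacity
region `ℛ_d` is nonempty, then `ℛ_d = ℛ_r`. -/
theorem statement13 {𝒳 𝒴 𝒮 : Type*} [Fintype 𝒳] [DecidableEq 𝒳] [Fintype 𝒴] [DecidableEq 𝒴]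
    [Fintype 𝒮] [Nonempty 𝒮] {d : ℕ}
    (ρ : 𝒳 → 𝒴 → 𝒮 → Matrix (Fin d) (Fin d) ℂ)
    (hρ : ∀ x y s, IsDensity (ρ x y s))
    (hInt : (interior (Rd ρ)).Nonempty) :
    Rd ρ = Rr ρ :=
  statement13_general ρ hρ hInt
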